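/- Let d = 4 and assume s ≥ 7 (where Q(s) = kγ). Then: (1) for every λ ∈ (0,1) there exist a, b, c > 0 such that Ψ(ω, λ, a, b, c) ≤ 4^{1−2γ} for every ω ∈ (0,1); (2) for every ε > 0 there exists δ > 0 such that for every λ ∈ (0,1) with |λ − 3/4| ≥ ε, the reals a, b, c > 0 can be chosen so that Ψ(ω, λ, a, b, c) ≤ 4^{1−2γ} − δ for every ω ∈ (0,1). -/

import Mathlib

/-- `q(x) = exp(x) - x - 1`. -/
noncomputable def q (x : ℝ) : ℝ := Real.exp x - x - 1

/-- `Q(x) = x·(exp(x) − 1)/(exp(x) − x − 1)`. -/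
noncomputable def Qf (x : ℝ) : ℝ := x * (Real.exp x - 1) / (Real.exp x - x - 1)

/-- The generating polynomial `p(z) = (1/d)·((1+z)^k + (d−1)·(1 − z/(d−1))^k)`. -/
noncomputable def pgen (d k : ℕ) (z : ℝ) : ℝ :=
  (1/(d:ℝ)) * ((1+z)^k + ((d:ℝ)-1) * (1 - z/((d:ℝ)-1))^k)

/-- `Ψ(ω,λ,x,y,z)` for the uniquely extendible case. -/
noncomputable def Psi (d k : ℕ) (γ s ω lam x y z : ℝ) : ℝ :=
  (((d:ℝ)-1) * q x / (q s * ω)) ^ ω *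
  (q y / (q s * (1-ω))) ^ (1-ω) *
  (lam * s / (x*z)) ^ (lam * ((k:ℝ)*γ)) *
  ((1-lam) * s / y) ^ ((1-lam) * ((k:ℝ)*γ)) *
  (pgen d k z / (d:ℝ)) ^ γ

/-- The reduced two-parameter condition. -/
def Good (Q : ℝ) (g : ℝ → ℝ) (ρ : ℝ) : Prop :=
  ∃ t c : ℝ, 0 < t ∧ 0 < c ∧ t * c = ρ ∧
    (1 + 3 * g t) * ((1 + c) ^ Q + 3 * |1 - c / 3| ^ Q) < 4 * (1 + t * c) ^ Q

lemma pow_mono7 {Q y : ℝ} (hQ : 7 ≤ Q) (hy : -7 ≤ y) : (1 + y / 7) ^ 7 ≤ (1 + y / Q) ^ Q := by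
  have hQ0 : 0 < Q := by linarith
  have h1 : -1 ≤ y / Q := by
    rw [le_div_iff₀ hQ0]; linarith
  have h2 := one_add_mul_self_le_rpow_one_add h1 (p := Q / 7) (by linarith)
  have h3 : Q / 7 * (y / Q) = y / 7 := by field_simp
  rw [h3] at h2
  have h4 : (1 + y / Q) ^ Q = ((1 + y / Q) ^ (Q / 7)) ^ 7 := by
    rw [← Real.rpow_mul_natCast (by linarith)]
    congr 1
    push_cast
    ring
  rw [h4]
  exact pow_le_pow_left₀ (by linarith) h2 7

lemma exp_neg_le {l B : ℝ} (hl : 0 ≤ l) (hB : 0 < B)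
    (h : 1 ≤ B * ∑ i ∈ Finset.range 12, l ^ i / (i.factorial : ℝ)) : Real.exp (-l) ≤ B := by
  have h1 := Real.sum_le_exp_of_nonneg hl 12
  have h2 : Real.exp (-l) * Real.exp l = 1 := by rw [← Real.exp_add]; simp
  have h3 : 1 ≤ B * Real.exp l := h.trans (mul_le_mul_of_nonneg_left h1 hB.le)
  have h4 := Real.exp_pos l
  by_contra hc
  push Not at hc
  nlinarith

lemma good_R {Q : ℝ} {g : ℝ → ℝ} {ρ t c X R : ℝ} (hQ : 7 ≤ Q) (ht : 0 < t) (hc : 0 < c)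
    (hρ : t * c = ρ) (htX : t = 1 + X / Q) (hg : g t ≤ Real.exp X) (hg0 : 0 ≤ g t)
    (hR : (|1 - c / 3| / (1 + c)) ^ Q ≤ R) (hX : -7 ≤ c / (1 + c) * X)
    (hmain : (1 + 3 * Real.exp X) * (1 + 3 * R) < 4 * (1 + c / (1 + c) * X / 7) ^ 7) :
    Good Q g ρ := by
  refine ⟨t, c, ht, hc, hρ, ?_⟩
  have hQ0 : 0 < Q := by linarith
  have h1c : 0 < 1 + c := by linarith
  have hpos : 0 < (1 + c) ^ Q := Real.rpow_pos_of_pos h1c Q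
  have e1 : |1 - c / 3| ^ Q = (|1 - c / 3| / (1 + c)) ^ Q * (1 + c) ^ Q := by
    rw [← Real.mul_rpow (by positivity) h1c.le]
    congr 1
    field_simp
  have e2 : (1 + t * c) ^ Q = (1 + c / (1 + c) * X / Q) ^ Q * (1 + c) ^ Q := by
    have e3 : 1 + t * c = (1 + c / (1 + c) * X / Q) * (1 + c) := by
      rw [htX]; field_simp; ring
    have : 0 < 1 + t * c := by positivity
    rw [e3]
    rw [e3] at this
    rw [Real.mul_rpow _ h1c.le]
    exact (pos_of_mul_pos_left this h1c.le).le
  have h7 := pow_mono7 hQ hX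
  rw [e1, e2]
  have hr0 : 0 ≤ (|1 - c / 3| / (1 + c)) ^ Q := by positivity
  set r := (|1 - c / 3| / (1 + c)) ^ Q
  have h8 : (1 + 3 * g t) * (1 + 3 * r) ≤ (1 + 3 * Real.exp X) * (1 + 3 * R) := by
    gcongr
  have h9 : (1 + 3 * g t) * (1 + 3 * r) < 4 * (1 + c / (1 + c) * X / Q) ^ Q := by linarith
  calc (1 + 3 * g t) * ((1 + c) ^ Q + 3 * (r * (1 + c) ^ Q))
      = ((1 + 3 * g t) * (1 + 3 * r)) * (1 + c) ^ Q := by ring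
    _ < (4 * (1 + c / (1 + c) * X / Q) ^ Q) * (1 + c) ^ Q := by gcongr
    _ = _ := by ring

lemma rpow_le7 {Q r : ℝ} (hQ : 7 ≤ Q) (hr0 : 0 ≤ r) (hr : r ≤ 1) : r ^ Q ≤ r ^ 7 := by
  rcases hr0.eq_or_lt with h | h
  · rw [← h, Real.zero_rpow (by linarith)]; simp
  · rw [← Real.rpow_natCast r 7]
    exact Real.rpow_le_rpow_of_exponent_ge h hr (by push_cast; linarith)

/-- near `c = 3` -/
lemma near_ineq {w : ℝ} (h1 : -(1/2) ≤ w) (h2 : w ≤ 1/2) (h0 : w ≠ 0) :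
    (1 + 3 * Real.exp (-w)) * (1 + 3 * (w ^ 2 * (2 / 1000))) <
      4 * (1 + (3 - 4 * w) / (4 - 4 * w) * (-w) / 7) ^ 7 := by
  have hexp : Real.exp (-w) ≤ 1 - w + w ^ 2 / 2 - w ^ 3 / 6 + w ^ 4 * (5 / 96) := by
    have hab : |(-w)| ≤ 1 := by rw [abs_le]; constructor <;> linarith
    have := (abs_le.1 (Real.exp_bound hab (n := 4) (by norm_num))).2
    have e4 : |(-w)| ^ 4 = w ^ 4 := by
      rw [abs_neg]; exact (show Even 4 by decide).pow_abs w
    rw [e4] at this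
    norm_num [Finset.sum_range_succ, Nat.factorial] at this
    nlinarith
  set y := (3 - 4 * w) / (4 - 4 * w) * w with hy
  have hw1 : 0 < 1 - w := by linarith
  have hyw : y = (w * (3 / 4 - w)) / (1 - w) := by
    rw [hy, show (4 - 4 * w) = 4 * (1 - w) by ring]; field_simp
  have hy1 : y ≤ 1 := by
    rw [hyw, div_le_one hw1]; nlinarith [sq_nonneg (w - 7/8)]
  have hy2 : -1 ≤ y := by
    rw [hyw, le_div_iff₀ hw1]; nlinarith
  have hpow : 1 - y + 3 / 7 * y ^ 2 - 5 / 49 * y ^ 3 ≤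
      (1 + (3 - 4 * w) / (4 - 4 * w) * (-w) / 7) ^ 7 := by
    have : (3 - 4 * w) / (4 - 4 * w) * (-w) = -y := by rw [hy]; ring
    rw [this]
    have e : (1 + -y / 7) ^ 7 - (1 - y + 3 / 7 * y ^ 2 - 5 / 49 * y ^ 3) =
      y ^ 4 * (5 / 343 - 3 / 2401 * y + y ^ 2 / 16807 - y ^ 3 / 823543) := by ring
    have h5 : 0 ≤ (5 / 343 - 3 / 2401 * y + y ^ 2 / 16807 - y ^ 3 / 823543) := by
      nlinarith [sq_nonneg y]
    have : 0 ≤ y ^ 4 * (5 / 343 - 3 / 2401 * y + y ^ 2 / 16807 - y ^ 3 / 823543) := by positivity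
    linarith
  have hLHS : (1 + 3 * Real.exp (-w)) * (1 + 3 * (w ^ 2 * (2 / 1000))) ≤
      (1 + 3 * (1 - w + w ^ 2 / 2 - w ^ 3 / 6 + w ^ 4 * (5 / 96))) *
        (1 + 3 * (w ^ 2 * (2 / 1000))) := by gcongr
  set h : ℝ := 1541/3500 - 12111/19600 * w - 12417/39200 * w ^ 2 + 185043/196000 * w ^ 3
    - 482571/784000 * w ^ 4 + 2833/16000 * w ^ 5 - 93/16000 * w ^ 6 + 3/3200 * w ^ 7 with hh
  have key : (1 - w) ^ 3 * (4 * (1 - y + 3 / 7 * y ^ 2 - 5 / 49 * y ^ 3) -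
      (1 + 3 * (1 - w + w ^ 2 / 2 - w ^ 3 / 6 + w ^ 4 * (5 / 96))) *
        (1 + 3 * (w ^ 2 * (2 / 1000)))) = w ^ 2 * h := by
    rw [hyw, hh]; field_simp; ring
  have hpos : 0 < h := by
    rcases le_total 0 w with hw | hw
    · have a3 : 0 ≤ w ^ 3 := by positivity
      have a4 : w ^ 4 ≤ w ^ 3 / 2 := by nlinarith
      have a5 : 0 ≤ w ^ 5 := by positivity
      have a6 : w ^ 6 ≤ w ^ 5 / 2 := by nlinarith
      have a7 : 0 ≤ w ^ 7 := by positivity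
      have : 0 < 1541/3500 - 12111/19600 * w - 12417/39200 * w ^ 2 + 6/10 * w ^ 3 := by
        nlinarith [mul_nonneg hw (sq_nonneg (w - 1/2))]
      rw [hh]; linarith
    · obtain ⟨u, rfl⟩ : ∃ u, w = -u := ⟨-w, by ring⟩
      have hu : 0 ≤ u := by linarith
      have hu2 : u ≤ 1 / 2 := by linarith
      have hk : ∀ n : ℕ, u ^ (n + 1) ≤ (1 / 2) ^ n * u := by
        intro n; rw [pow_succ]; gcongr
      have a2 := hk 1
      have a3 := hk 2
      have a4 := hk 3
      have a5 := hk 4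
      have a6 := hk 5
      have a7 := hk 6
      norm_num at a2 a3 a4 a5 a6 a7
      rw [hh]
      ring_nf
      linarith
  have hw2 : 0 < w ^ 2 := by positivity
  have : 0 < (1 - w) ^ 3 * (4 * (1 - y + 3 / 7 * y ^ 2 - 5 / 49 * y ^ 3) -
      (1 + 3 * (1 - w + w ^ 2 / 2 - w ^ 3 / 6 + w ^ 4 * (5 / 96))) *
        (1 + 3 * (w ^ 2 * (2 / 1000)))) := by rw [key]; positivity
  have := pos_of_mul_pos_right this (by positivity)
  linarith

lemma good_near {Q : ℝ} {g : ℝ → ℝ} {ρ w : ℝ} (hQ : 7 ≤ Q)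
    (hg0 : ∀ t, 0 < t → 0 ≤ g t) (hg : ∀ t, 0 < t → g t ≤ Real.exp ((t - 1) * Q))
    (h1 : -(1/2) ≤ w) (h2 : w ≤ 1/2) (h0 : w ≠ 0) (hρ : (1 - w / Q) * (3 - 4 * w) = ρ) :
    Good Q g ρ := by
  have hQ0 : 0 < Q := by linarith
  have ht : 0 < 1 - w / Q := by
    have : w / Q < 1 := by rw [div_lt_one hQ0]; linarith
    linarith
  have hw1 : 0 < 1 - w := by linarith
  have e0 : 1 + (3 - 4 * w) = 4 - 4 * w := by ring
  refine good_R (X := -w) (R := w ^ 2 * (2 / 1000)) hQ ht (by linarith) hρ (by ring) ?_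
    (hg0 _ ht) ?_ ?_ ?_
  · have := hg _ ht
    rwa [show (1 - w / Q - 1) * Q = -w by field_simp; ring] at this
  · rw [e0, show 1 - (3 - 4 * w) / 3 = 4 / 3 * w by ring, abs_mul, abs_of_pos (by norm_num : (0:ℝ) < 4 / 3)]
    have ha : |w| ≤ 1 / 2 := by rw [abs_le]; constructor <;> linarith
    have ha0 := abs_nonneg w
    have hr : 4 / 3 * |w| / (4 - 4 * w) ≤ 2 / 3 * |w| := by
      rw [div_le_iff₀ (by linarith)]; nlinarith
    have hr0 : 0 ≤ 4 / 3 * |w| / (4 - 4 * w) := div_nonneg (by positivity) (by linarith)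
    refine (rpow_le7 hQ hr0 (by linarith)).trans ?_
    refine (pow_le_pow_left₀ hr0 hr 7).trans ?_
    have h5 : |w| ^ 5 ≤ (1/2) ^ 5 := pow_le_pow_left₀ ha0 ha 5
    have e : (2 / 3 * |w|) ^ 7 = w ^ 2 * ((2/3) ^ 7 * |w| ^ 5) := by
      rw [← sq_abs w]; ring
    rw [e]
    gcongr
    nlinarith
  · rw [e0]
    have : (3 - 4 * w) / (4 - 4 * w) ≤ 1 := by rw [div_le_one (by linarith)]; linarith
    have h3 : 0 ≤ (3 - 4 * w) / (4 - 4 * w) := div_nonneg (by linarith) (by linarith)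
    nlinarith
  · rw [e0]; exact near_ineq h1 h2 h0

lemma rpow_le_exp {Q x : ℝ} (hQ : 0 ≤ Q) (hx : 0 ≤ 1 + x) : (1 + x) ^ Q ≤ Real.exp (x * Q) := by
  rw [Real.exp_mul]
  exact Real.rpow_le_rpow hx (by linarith [Real.add_one_le_exp x]) hQ

lemma exp_half_le : Real.exp (1/2) ≤ 1.6488 := by
  have h1 : Real.exp (1/2) * Real.exp (1/2) = Real.exp 1 := by rw [← Real.exp_add]; norm_num
  have h2 := Real.exp_one_lt_d9
  by_contra hc
  push Not at hc
  nlinarith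

lemma exp_d1 : Real.exp (-(7/4)) ≤ 0.1738 :=
  exp_neg_le (by norm_num) (by norm_num) (by norm_num [Finset.sum_range_succ, Nat.factorial])

/-- large `c` -/
lemma good_large {Q : ℝ} {g : ℝ → ℝ} {ρ c : ℝ} (hQ : 7 ≤ Q)
    (hg0 : ∀ t, 0 < t → 0 ≤ g t) (hg : ∀ t, 0 < t → g t ≤ Real.exp ((t - 1) * Q))
    (hc : 5 ≤ c) (hρ : (1 + 1 / (2 * Q)) * c = ρ) : Good Q g ρ := by
  have hQ0 : 0 < Q := by linarith
  have ht : 0 < 1 + 1 / (2 * Q) := by positivity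
  have hmu : 5 / 6 ≤ c / (1 + c) := by rw [le_div_iff₀ (by linarith)]; linarith
  refine good_R (X := 1/2) (R := (1/3) ^ 7) hQ ht (by linarith) hρ (by field_simp) ?_
    (hg0 _ ht) ?_ ?_ ?_
  · have := hg _ ht
    rwa [show (1 + 1 / (2 * Q) - 1) * Q = 1/2 by field_simp; ring] at this
  · have hr : |1 - c / 3| / (1 + c) ≤ 1 / 3 := by
      rw [div_le_iff₀ (by linarith), abs_le]; constructor <;> linarith
    have hr0 : 0 ≤ |1 - c / 3| / (1 + c) := by positivity
    exact (rpow_le7 hQ hr0 (by linarith)).trans (pow_le_pow_left₀ hr0 hr 7)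
  · linarith
  · have h1 := exp_half_le
    have h2 : (1 + 5 / 6 * (1/2) / 7 : ℝ) ^ 7 ≤ (1 + c / (1 + c) * (1/2) / 7) ^ 7 := by gcongr
    have h3 : (1 + 3 * Real.exp (1/2)) * (1 + 3 * (1/3) ^ 7) ≤
      (1 + 3 * 1.6488) * (1 + 3 * (1/3 : ℝ) ^ 7) := by gcongr
    refine h3.trans_lt (lt_of_lt_of_le ?_ (mul_le_mul_of_nonneg_left h2 (by norm_num)))
    norm_num

lemma p4_step {w l u B : ℝ} (h1 : l ≤ w) (h2 : w ≤ u) (hu : u ≤ 2) (hl : 0 ≤ l) (hB0 : 0 < B)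
    (hB : 1 ≤ B * ∑ i ∈ Finset.range 12, l ^ i / (i.factorial : ℝ))
    (h : (1 + 3 * B) * (1 + 3 * (1/3) ^ 7) < 4 * (1 - u / 14) ^ 7) :
    (1 + 3 * Real.exp (-w)) * (1 + 3 * (1/3) ^ 7) < 4 * (1 - w / 14) ^ 7 := by
  have h3 := exp_neg_le hl hB0 hB
  have h4 : Real.exp (-w) ≤ B := le_trans (Real.exp_le_exp.2 (by linarith)) h3
  have h5 : (1 - u / 14) ^ 7 ≤ (1 - w / 14) ^ 7 :=
    pow_le_pow_left₀ (by linarith) (by linarith) 7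
  have h6 : (1 + 3 * Real.exp (-w)) * (1 + 3 * (1/3) ^ 7) ≤ (1 + 3 * B) * (1 + 3 * (1/3) ^ 7) := by
    gcongr
  linarith

lemma p4_ineq {w : ℝ} (h1 : 1/2 ≤ w) (h2 : w ≤ 7/4) :
    (1 + 3 * Real.exp (-w)) * (1 + 3 * (1/3) ^ 7) < 4 * (1 - w / 14) ^ 7 := by
  rcases le_total w 0.6 with h | h
  · exact p4_step (l := 1/2) (u := 0.6) (B := 0.6066) h1 h (by norm_num) (by norm_num) (by norm_num)
      (by norm_num [Finset.sum_range_succ, Nat.factorial]) (by norm_num)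
  clear h1
  rcases le_total w 0.75 with h' | h'
  · exact p4_step (B := 0.5489) h h' (by norm_num) (by norm_num) (by norm_num)
      (by norm_num [Finset.sum_range_succ, Nat.factorial]) (by norm_num)
  clear h
  rcases le_total w 0.9 with h | h
  · exact p4_step (B := 0.4724) h' h (by norm_num) (by norm_num) (by norm_num)
      (by norm_num [Finset.sum_range_succ, Nat.factorial]) (by norm_num)
  clear h'
  rcases le_total w 1.1 with h' | h'
  · exact p4_step (B := 0.4066) h h' (by norm_num) (by norm_num) (by norm_num)
      (by norm_num [Finset.sum_range_succ, Nat.factorial]) (by norm_num)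
  clear h
  rcases le_total w 1.3 with h | h
  · exact p4_step (B := 0.3329) h' h (by norm_num) (by norm_num) (by norm_num)
      (by norm_num [Finset.sum_range_succ, Nat.factorial]) (by norm_num)
  clear h'
  rcases le_total w 1.45 with h' | h'
  · exact p4_step (B := 0.2726) h h' (by norm_num) (by norm_num) (by norm_num)
      (by norm_num [Finset.sum_range_succ, Nat.factorial]) (by norm_num)
  clear h
  rcases le_total w 1.6 with h | h
  · exact p4_step (B := 0.2346) h' h (by norm_num) (by norm_num) (by norm_num)
      (by norm_num [Finset.sum_range_succ, Nat.factorial]) (by norm_num)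
  clear h'
  rcases le_total w 1.69 with h' | h'
  · exact p4_step (B := 0.202) h h' (by norm_num) (by norm_num) (by norm_num)
      (by norm_num [Finset.sum_range_succ, Nat.factorial]) (by norm_num)
  · exact p4_step (B := 0.1847) h' h2 (by norm_num) (by norm_num) (by norm_num)
      (by norm_num [Finset.sum_range_succ, Nat.factorial]) (by norm_num)

/-- `c = 1` -/
lemma good_p4 {Q : ℝ} {g : ℝ → ℝ} {ρ w : ℝ} (hQ : 7 ≤ Q)
    (hg0 : ∀ t, 0 < t → 0 ≤ g t) (hg : ∀ t, 0 < t → g t ≤ Real.exp ((t - 1) * Q))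
    (h1 : 1/2 ≤ w) (h2 : w ≤ 7/4) (hρ : 1 - w / Q = ρ) : Good Q g ρ := by
  have hQ0 : 0 < Q := by linarith
  have ht : 0 < 1 - w / Q := by
    have : w / Q < 1 := by rw [div_lt_one hQ0]; linarith
    linarith
  refine good_R (X := -w) (c := 1) (R := (1/3) ^ 7) hQ ht (by norm_num) (by rw [mul_one, hρ])
    (by ring) ?_ (hg0 _ ht) ?_ ?_ ?_
  · have := hg _ ht
    rwa [show (1 - w / Q - 1) * Q = -w by field_simp; ring] at this
  · have : |1 - 1 / 3| / (1 + 1) = (1/3 : ℝ) := by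
      rw [abs_of_pos (by norm_num)]; norm_num
    rw [this]
    exact rpow_le7 hQ (by norm_num) (by norm_num)
  · norm_num; linarith
  · have := p4_ineq h1 h2
    rw [show (1 + 1 / (1 + 1) * -w / 7 : ℝ) = 1 - w / 14 by ring]
    exact this

lemma p3_step {m l u : ℝ} (h1 : l ≤ m) (h2 : m ≤ u) (hu : u ≤ 1/2)
    (h : (1 + 3 * 0.1738) * (1 + 3 * (1 - 4 * l / 3) ^ 7) < 4 * (1 - u / 4) ^ 7) :
    (1 + 3 * Real.exp (-(7/4))) * (1 + 3 * (1 - 4 * m / 3) ^ 7) < 4 * (1 - m / 4) ^ 7 := by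
  have h3 := exp_d1
  have h5 : (1 - u / 4) ^ 7 ≤ (1 - m / 4) ^ 7 :=
    pow_le_pow_left₀ (by linarith) (by linarith) 7
  have h0 : 0 ≤ 1 - 4 * m / 3 := by linarith
  have h7 : (1 - 4 * m / 3) ^ 7 ≤ (1 - 4 * l / 3) ^ 7 :=
    pow_le_pow_left₀ h0 (by linarith) 7
  have h6 : (1 + 3 * Real.exp (-(7/4))) * (1 + 3 * (1 - 4 * m / 3) ^ 7) ≤
      (1 + 3 * 0.1738) * (1 + 3 * (1 - 4 * l / 3) ^ 7) := by
    gcongr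
  linarith

lemma p3_ineq {m : ℝ} (h1 : 1/8 ≤ m) (h2 : m ≤ 1/2) :
    (1 + 3 * Real.exp (-(7/4))) * (1 + 3 * (1 - 4 * m / 3) ^ 7) < 4 * (1 - m / 4) ^ 7 := by
  rcases le_total m 0.19 with h | h
  · exact p3_step h1 h (by norm_num) (by norm_num)
  rcases le_total m 0.3 with h' | h'
  · exact p3_step h h' (by norm_num) (by norm_num)
  rcases le_total m 0.4 with h'' | h''
  · exact p3_step h' h'' (by norm_num) (by norm_num)
  · exact p3_step h'' h2 (by norm_num) (by norm_num)

/-- `w = 7/4` -/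
lemma good_p3 {Q : ℝ} {g : ℝ → ℝ} {ρ c : ℝ} (hQ : 7 ≤ Q)
    (hg0 : ∀ t, 0 < t → 0 ≤ g t) (hg : ∀ t, 0 < t → g t ≤ Real.exp ((t - 1) * Q))
    (h1 : 1 / Q ≤ c) (h2 : c ≤ 1) (hρ : (1 - (7/4) / Q) * c = ρ) : Good Q g ρ := by
  have hQ0 : 0 < Q := by linarith
  have ht : 0 < 1 - (7/4) / Q := by
    have : (7/4) / Q < 1 := by rw [div_lt_one hQ0]; linarith
    linarith
  have hc : 0 < c := lt_of_lt_of_le (by positivity) h1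
  have h1c : 0 < 1 + c := by linarith
  have hgt : g (1 - (7/4) / Q) ≤ Real.exp (-(7/4)) := by
    have := hg _ ht
    rwa [show (1 - (7/4) / Q - 1) * Q = -(7/4) by field_simp; ring] at this
  set m := c / (1 + c) with hm
  have hm0 : 0 < m := by positivity
  have hm2 : m ≤ 1/2 := by rw [hm, div_le_iff₀ h1c]; linarith
  have hr : |1 - c / 3| / (1 + c) = 1 - 4 * m / 3 := by
    rw [abs_of_pos (by linarith), hm]; field_simp; ring
  have hlow : -7 ≤ c / (1 + c) * (-(7/4)) := by rw [← hm]; linarith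
  rcases le_total (1/8) m with h8 | h8
  · refine good_R (X := -(7/4)) (R := (1 - 4 * m / 3) ^ 7) hQ ht hc hρ (by ring) hgt
      (hg0 _ ht) ?_ hlow ?_
    · rw [hr]; exact rpow_le7 hQ (by linarith) (by linarith)
    · rw [← hm, show (1 + m * -(7/4) / 7) = 1 - m / 4 by ring]
      exact p3_ineq h8 hm2
  · refine good_R (X := -(7/4)) (R := 0.3116) hQ ht hc hρ (by ring) hgt
      (hg0 _ ht) ?_ hlow ?_
    · rw [hr]
      have := rpow_le_exp hQ0.le (x := -(4 * m / 3)) (by linarith)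
      rw [← sub_eq_add_neg] at this
      refine this.trans ?_
      have hmQ : 7 / 8 ≤ m * Q := by
        have e : 1 - m = 1 / (1 + c) := by rw [hm]; field_simp; ring
        have e2 : m = c * (1 - m) := by rw [e, hm]; ring
        have : 1 ≤ c * Q := by rwa [div_le_iff₀ hQ0] at h1
        rw [e2]; nlinarith
      have h3 : Real.exp (-(7/6)) ≤ 0.3116 :=
        exp_neg_le (by norm_num) (by norm_num) (by norm_num [Finset.sum_range_succ, Nat.factorial])
      exact le_trans (Real.exp_le_exp.2 (by linarith)) h3
    · rw [← hm, show (1 + m * -(7/4) / 7) = 1 - m / 4 by ring]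
      have h3 := exp_d1
      have h5 : (1 - (1/8) / 4 : ℝ) ^ 7 ≤ (1 - m / 4) ^ 7 :=
        pow_le_pow_left₀ (by norm_num) (by linarith) 7
      norm_num at h5 ⊢
      linarith

lemma exp_third : Real.exp (-(1/3)) ≤ 0.71654 :=
  exp_neg_le (by norm_num) (by norm_num) (by norm_num [Finset.sum_range_succ, Nat.factorial])

lemma p2_step {t l u B E : ℝ} (h1 : l ≤ t) (hl : 0 ≤ l) (hE0 : 0 ≤ E) (hE : E ≤ Real.exp (-u))
    (hu : 0 ≤ u) (hB0 : 0 < B)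
    (hB : 1 ≤ B * ∑ i ∈ Finset.range 12, u ^ i / (i.factorial : ℝ))
    (h : (1 + 3 * B) * 4.868 < 4 * (1 + l / 7) ^ 7) :
    (1 + 3 * E) * 4.868 < 4 * (1 + t / 7) ^ 7 := by
  have h3 := exp_neg_le hu hB0 hB
  have h5 : (1 + l / 7) ^ 7 ≤ (1 + t / 7) ^ 7 := by gcongr
  linarith

/-- `c = 1/Q` -/
lemma good_p2 {Q : ℝ} {g : ℝ → ℝ} {ρ t : ℝ} (hQ : 7 ≤ Q)
    (hg0 : ∀ t, 0 < t → 0 ≤ g t) (hg : ∀ t, 0 < t → g t ≤ Real.exp ((t - 1) * Q))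
    (h1 : 1 / 4 ≤ t) (h2 : t ≤ 1 - (7/4) / Q) (hρ : t * (1 / Q) = ρ) : Good Q g ρ := by
  have hQ0 : 0 < Q := by linarith
  have ht : 0 < t := by linarith
  refine ⟨t, 1 / Q, ht, by positivity, hρ, ?_⟩
  have hQi : 1 / Q ≤ 1 / 7 := one_div_le_one_div_of_le (by norm_num) hQ
  have hQp : 0 < 1 / Q := by positivity
  have hmid : (1 + 1 / Q) ^ Q + 3 * |1 - 1 / Q / 3| ^ Q ≤ 4.868 := by
    have a1 := rpow_le_exp hQ0.le (x := 1 / Q) (by linarith)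
    have a2 := rpow_le_exp hQ0.le (x := -(1 / Q / 3)) (by linarith)
    rw [show 1 / Q * Q = 1 by field_simp] at a1
    rw [show -(1 / Q / 3) * Q = -(1/3) by field_simp] at a2
    rw [abs_of_pos (by linarith), sub_eq_add_neg]
    have := Real.exp_one_lt_d9
    have := exp_third
    linarith
  have h7 := pow_mono7 hQ (y := t) (by linarith)
  rw [show t * (1 / Q) = t / Q by ring]
  have hgt0 := hg0 t ht
  have hgt := hg t ht
  have hw : (t - 1) * Q ≤ -(7/4) := by
    have : 7 / 4 / Q * Q = 7 / 4 := by field_simp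
    nlinarith
  have hw7 : (t - 1) * Q ≤ -(7 * (1 - t)) := by nlinarith
  have key : (1 + 3 * g t) * 4.868 < 4 * (1 + t / 7) ^ 7 := by
    rcases le_total t 0.4 with h | h
    · exact p2_step (u := 4.2) (B := 0.0151) h1 (by norm_num) hgt0
        (hgt.trans (Real.exp_le_exp.2 (by linarith))) (by norm_num) (by norm_num)
        (by norm_num [Finset.sum_range_succ, Nat.factorial]) (by norm_num)
    rcases le_total t 0.6 with h' | h'
    · exact p2_step (u := 2.8) (B := 0.061) h (by norm_num) hgt0
        (hgt.trans (Real.exp_le_exp.2 (by linarith))) (by norm_num) (by norm_num)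
        (by norm_num [Finset.sum_range_succ, Nat.factorial]) (by norm_num)
    rcases le_total t 0.7 with h'' | h''
    · exact p2_step (u := 2.1) (B := 0.123) h' (by norm_num) hgt0
        (hgt.trans (Real.exp_le_exp.2 (by linarith))) (by norm_num) (by norm_num)
        (by norm_num [Finset.sum_range_succ, Nat.factorial]) (by norm_num)
    · exact p2_step (u := 7/4) (B := 0.1738) h'' (by norm_num) hgt0
        (hgt.trans (Real.exp_le_exp.2 (by linarith))) (by norm_num) (by norm_num)
        (by norm_num [Finset.sum_range_succ, Nat.factorial]) (by norm_num)
  have : (1 + 3 * g t) * ((1 + 1 / Q) ^ Q + 3 * |1 - 1 / Q / 3| ^ Q) ≤ (1 + 3 * g t) * 4.868 := by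
    gcongr
  linarith

lemma exp_quart {x : ℝ} (hx : |x| ≤ 1) :
    Real.exp x ≤ 1 + x + x ^ 2 / 2 + x ^ 3 / 6 + x ^ 4 * (5 / 96) := by
  have := (abs_le.1 (Real.exp_bound hx (n := 4) (by norm_num))).2
  have e4 : |x| ^ 4 = x ^ 4 := (show Even 4 by decide).pow_abs x
  rw [e4] at this
  norm_num [Finset.sum_range_succ, Nat.factorial] at this
  nlinarith

/-- small `c` -/
lemma good_small {Q : ℝ} {g : ℝ → ℝ} {ρ t : ℝ} (hQ : 7 ≤ Q)
    (hg0 : ∀ t, 0 < t → 0 ≤ g t)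
    (hg2 : ∀ t, 0 < t → t ≤ 1/4 → g t ≤ 16 * t ^ 2 * Real.exp (-(3/4 * Q)))
    (h1 : 0 < t) (h2 : t ≤ 1/4) (hρ : t * (4 * t / Q) = ρ) : Good Q g ρ := by
  have hQ0 : 0 < Q := by linarith
  refine ⟨t, 4 * t / Q, h1, by positivity, hρ, ?_⟩
  have hb := one_add_mul_self_le_rpow_one_add (s := t * (4 * t / Q)) (p := Q)
    (le_trans (by norm_num) (by positivity : 0 ≤ t * (4 * t / Q))) (by linarith)
  rw [show Q * (t * (4 * t / Q)) = 4 * t ^ 2 by field_simp] at hb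
  have hgt : g t ≤ 0.085 * t ^ 2 := by
    have h3 : Real.exp (-(21/4)) ≤ 0.0053 :=
      exp_neg_le (by norm_num) (by norm_num) (by norm_num [Finset.sum_range_succ, Nat.factorial])
    have h4 : Real.exp (-(3/4 * Q)) ≤ 0.0053 :=
      le_trans (Real.exp_le_exp.2 (by linarith)) h3
    have := hg2 t h1 h2
    have : 16 * t ^ 2 * Real.exp (-(3/4 * Q)) ≤ 16 * t ^ 2 * 0.0053 := by gcongr
    nlinarith
  have hc3 : 4 * t / Q ≤ 1 := by rw [div_le_one hQ0]; linarith
  have hc0 : 0 < 4 * t / Q := by positivity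
  have hmid : (1 + 4 * t / Q) ^ Q + 3 * |1 - 4 * t / Q / 3| ^ Q ≤
      4 * (1 + 16 / 6 * t ^ 2 + 64 / 27 * t ^ 3 + 3.5 * t ^ 4) := by
    have a1 := rpow_le_exp hQ0.le (x := 4 * t / Q) (by linarith)
    have a2 := rpow_le_exp hQ0.le (x := -(4 * t / Q / 3)) (by linarith)
    rw [show 4 * t / Q * Q = 4 * t by field_simp] at a1
    rw [show -(4 * t / Q / 3) * Q = -(4 * t / 3) by field_simp] at a2
    rw [abs_of_pos (by linarith), sub_eq_add_neg]
    have b1 := exp_quart (x := 4 * t) (by rw [abs_le]; constructor <;> linarith)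
    have b2 := exp_quart (x := -(4 * t / 3)) (by rw [abs_le]; constructor <;> linarith)
    have : 0 ≤ t ^ 4 := by positivity
    nlinarith
  have hgt0 := hg0 t h1
  have hA : (1 + 3 * g t) * ((1 + 4 * t / Q) ^ Q + 3 * |1 - 4 * t / Q / 3| ^ Q) ≤
      (1 + 3 * (0.085 * t ^ 2)) * (4 * (1 + 16 / 6 * t ^ 2 + 64 / 27 * t ^ 3 + 3.5 * t ^ 4)) := by
    gcongr
  have hB : (1 + 3 * (0.085 * t ^ 2)) * (4 * (1 + 16 / 6 * t ^ 2 + 64 / 27 * t ^ 3 + 3.5 * t ^ 4))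
      < 4 * (1 + 4 * t ^ 2) := by
    have t2 : t ^ 2 ≤ 1/16 := by nlinarith
    have hP : 1 + 16 / 6 * t ^ 2 + 64 / 27 * t ^ 3 + 3.5 * t ^ 4 ≤ 1 + 3.48 * t ^ 2 := by
      have e3 : t ^ 3 ≤ 1/4 * t ^ 2 := by nlinarith [sq_nonneg t]
      have e4 : t ^ 4 ≤ 1/16 * t ^ 2 := by nlinarith [sq_nonneg t]
      linarith
    have hp2 : 0 < t ^ 2 := by positivity
    have : (1 + 3 * (0.085 * t ^ 2)) * (1 + 16 / 6 * t ^ 2 + 64 / 27 * t ^ 3 + 3.5 * t ^ 4) ≤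
      (1 + 3 * (0.085 * t ^ 2)) * (1 + 3.48 * t ^ 2) := by gcongr
    nlinarith
  linarith

/-- the core inequality -/
lemma good_all {Q : ℝ} {g : ℝ → ℝ} {ρ : ℝ} (hQ : 7 ≤ Q)
    (hg0 : ∀ t, 0 < t → 0 ≤ g t) (hg : ∀ t, 0 < t → g t ≤ Real.exp ((t - 1) * Q))
    (hg2 : ∀ t, 0 < t → t ≤ 1/4 → g t ≤ 16 * t ^ 2 * Real.exp (-(3/4 * Q)))
    (hρ : 0 < ρ) (hρ3 : ρ ≠ 3) : Good Q g ρ := by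
  have hQ0 : 0 < Q := by linarith
  have hQi : 1 / Q ≤ 1 / 7 := one_div_le_one_div_of_le (by norm_num) hQ
  have hQp : 0 < 1 / Q := by positivity
  have e74 : 7 / 4 / Q = 7 / 4 * (1 / Q) := by ring
  have hnear : ∀ ρ' : ℝ, ρ' ≠ 3 → (1 - (1/2) / Q) ≤ ρ' → ρ' ≤ (1 + 1 / (2 * Q)) * 5 →
      Good Q g ρ' := by
    intro ρ' h3 hl hu
    have hcont : ContinuousOn (fun w : ℝ => (1 - w / Q) * (3 - 4 * w)) (Set.Icc (-(1/2)) (1/2)) := by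
      fun_prop
    have := intermediate_value_Icc' (by norm_num) hcont
    obtain ⟨w, hw, hw2⟩ := this (show ρ' ∈ _ from ⟨by
      norm_num; norm_num at hl; linarith, by
      refine hu.trans (le_of_eq ?_)
      field_simp; ring⟩)
    refine good_near hQ hg0 hg hw.1 hw.2 ?_ hw2
    rintro rfl
    apply h3
    rw [← hw2]; norm_num
  rcases le_total ((1 + 1 / (2 * Q)) * 5) ρ with h | h
  · have : 0 < 1 + 1 / (2 * Q) := by positivity
    exact good_large (c := ρ / (1 + 1 / (2 * Q))) hQ hg0 hg
      (by rw [le_div_iff₀ this]; linarith) (by field_simp)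
  rcases le_total (1 - (1/2) / Q) ρ with h' | h'
  · exact hnear ρ hρ3 h' h
  clear h
  rcases le_total (1 - (7/4) / Q) ρ with h | h
  · refine good_p4 (w := (1 - ρ) * Q) hQ hg0 hg ?_ ?_ (by field_simp; ring)
    · have : (1/2) / Q ≤ 1 - ρ := by linarith
      rwa [div_le_iff₀ hQ0] at this
    · have : 1 - ρ ≤ (7/4) / Q := by linarith
      rwa [le_div_iff₀ hQ0] at this
  clear h'
  have ht : 0 < 1 - (7/4) / Q := by rw [e74]; linarith
  rcases le_total ((1 - (7/4) / Q) * (1 / Q)) ρ with h' | h'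
  · refine good_p3 (c := ρ / (1 - (7/4) / Q)) hQ hg0 hg ?_ ?_ ?_
    · rw [le_div_iff₀ ht]; linarith
    · rw [div_le_one ht]; exact h
    · rw [mul_div_cancel₀ _ ht.ne']
  clear h
  rcases le_total (1/4 * (1 / Q)) ρ with h | h
  · refine good_p2 (t := ρ * Q) hQ hg0 hg ?_ ?_ (by field_simp)
    · have := mul_le_mul_of_nonneg_right h hQ0.le
      rwa [mul_assoc, one_div_mul_cancel hQ0.ne', mul_one] at this
    · have := mul_le_mul_of_nonneg_right h' hQ0.le
      rwa [mul_assoc, one_div_mul_cancel hQ0.ne', mul_one] at this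
  · have hρQ : ρ * Q ≤ 1/4 := by
      have := mul_le_mul_of_nonneg_right h hQ0.le
      rwa [mul_assoc, one_div_mul_cancel hQ0.ne', mul_one] at this
    have hpos : 0 < ρ * Q / 4 := by positivity
    refine good_small (t := Real.sqrt (ρ * Q / 4)) hQ hg0 hg2 (Real.sqrt_pos.2 hpos) ?_ ?_
    · rw [Real.sqrt_le_left (by norm_num)]; linarith
    · have := Real.mul_self_sqrt hpos.le
      rw [show ∀ r : ℝ, r * (4 * r / Q) = r * r * (4 / Q) by intro r; ring, this]
      field_simp

lemma q_pos {x : ℝ} (hx : 0 < x) : 0 < q x := by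
  have := Real.add_one_lt_exp hx.ne'
  unfold q; linarith

lemma q_nonneg (x : ℝ) : 0 ≤ q x := by
  have := Real.add_one_le_exp x
  unfold q; linarith

lemma q_hasDeriv (x : ℝ) : HasDerivAt q (Real.exp x - 1) x := by
  have := ((Real.hasDerivAt_exp x).sub (hasDerivAt_id x)).sub_const 1
  exact this

lemma q_cont : Continuous q := by
  unfold q; fun_prop

/-- `q(θ y) ≤ θ q(y)` -/
lemma q_conv {θ y : ℝ} (h0 : 0 ≤ θ) (h1 : θ ≤ 1) : Real.exp (θ * y) ≤ θ * Real.exp y + (1 - θ) := by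
  have := convexOn_exp.2 (Set.mem_univ y) (Set.mem_univ 0) h0 (sub_nonneg.2 h1) (by ring)
  simpa using this

lemma q_lin {u v : ℝ} (hu : 0 ≤ u) (huv : u ≤ v) (hv : 0 < v) : q u * v ≤ u * q v := by
  have h := q_conv (θ := u / v) (y := v) (by positivity) (by rw [div_le_one hv]; exact huv)
  rw [div_mul_cancel₀ _ hv.ne'] at h
  have h2 := mul_le_mul_of_nonneg_right h hv.le
  have e : (u / v * Real.exp v + (1 - u / v)) * v = u * Real.exp v + v - u := by field_simp; ring
  rw [e] at h2
  unfold q; nlinarith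

lemma q_quad {θ y : ℝ} (h0 : 0 ≤ θ) (h1 : θ ≤ 1) (hy : 0 ≤ y) : q (θ * y) ≤ θ ^ 2 * q y := by
  have hd : ∀ x, HasDerivAt (fun y => θ ^ 2 * q y - q (θ * y))
      (θ ^ 2 * (Real.exp x - 1) - (Real.exp (θ * x) - 1) * θ) x := by
    intro x
    have a := (q_hasDeriv x).const_mul (θ ^ 2)
    have b := (q_hasDeriv (θ * x)).comp x ((hasDerivAt_id x).const_mul θ)
    rw [mul_one] at b
    exact a.sub b
  have hm : Monotone (fun y => θ ^ 2 * q y - q (θ * y)) := by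
    refine monotone_of_deriv_nonneg (fun x => (hd x).differentiableAt) (fun x => ?_)
    rw [(hd x).deriv]
    have := q_conv (y := x) h0 h1
    nlinarith [mul_le_mul_of_nonneg_left this h0]
  have := hm hy
  simp only [mul_zero] at this
  have q0 : q 0 = 0 := by simp [q]
  rw [q0] at this
  linarith

/-- tangent bound from log-concavity of `q` -/
lemma q_tangent {s L : ℝ} (hs : 0 < s) (hL : L * q s = Real.exp s - 1) {u : ℝ} (hu : 0 ≤ u) :
    q u ≤ q s * Real.exp (L * (u - s)) := by
  have hqs := q_pos hs
  have hL' : (L - 1) * q s = s := by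
    have : q s = Real.exp s - s - 1 := rfl
    linarith
  have hd : ∀ x, HasDerivAt (fun u => q u * Real.exp (-(L * (u - s))))
      ((x - (L - 1) * q x) * Real.exp (-(L * (x - s)))) x := by
    intro x
    have a := q_hasDeriv x
    have b : HasDerivAt (fun u => -(L * (u - s))) (-L) x := by
      have := (((hasDerivAt_id x).sub_const s).const_mul L).neg
      rwa [mul_one] at this
    have c := a.mul b.exp
    exact c.congr_deriv (by unfold q; ring)
  have hc : Continuous (fun u => q u * Real.exp (-(L * (u - s)))) :=
    continuous_iff_continuousAt.2 fun x => (hd x).continuousAt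
  have key : q u * Real.exp (-(L * (u - s))) ≤ q s := by
    have e : q s = q s * Real.exp (-(L * (s - s))) := by simp
    rw [e]
    rcases le_total u s with h | h
    · have hm : MonotoneOn (fun u => q u * Real.exp (-(L * (u - s)))) (Set.Icc 0 s) := by
        refine monotoneOn_of_deriv_nonneg (convex_Icc 0 s) hc.continuousOn
          (fun x _ => (hd x).differentiableAt.differentiableWithinAt) (fun x hx => ?_)
        rw [interior_Icc] at hx
        rw [(hd x).deriv]
        refine mul_nonneg ?_ (Real.exp_pos _).le
        have := q_lin hx.1.le hx.2.le hs
        have : (L - 1) * q x * q s ≤ x * q s := by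
          calc (L - 1) * q x * q s = q x * ((L - 1) * q s) := by ring
            _ = q x * s := by rw [hL']
            _ ≤ x * q s := this
        have := le_of_mul_le_mul_right this hqs
        linarith
      exact hm ⟨hu, h⟩ ⟨hs.le, le_rfl⟩ h
    · have hm : AntitoneOn (fun u => q u * Real.exp (-(L * (u - s)))) (Set.Ici s) := by
        refine antitoneOn_of_deriv_nonpos (convex_Ici s) hc.continuousOn
          (fun x _ => (hd x).differentiableAt.differentiableWithinAt) (fun x hx => ?_)
        rw [interior_Ici] at hx
        have hx : s < x := hx
        rw [(hd x).deriv]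
        refine mul_nonpos_of_nonpos_of_nonneg ?_ (Real.exp_pos _).le
        have := q_lin hs.le hx.le (hs.trans hx)
        have : x * q s ≤ (L - 1) * q x * q s := by
          calc x * q s = q s * x := by ring
            _ ≤ s * q x := this
            _ = (L - 1) * q s * q x := by rw [hL']
            _ = _ := by ring
        have := le_of_mul_le_mul_right this hqs
        linarith
      exact hm (Set.mem_Ici.2 le_rfl) h h
  have h2 := mul_le_mul_of_nonneg_right key (Real.exp_pos (L * (u - s))).le
  rwa [mul_assoc, ← Real.exp_add, neg_add_cancel, Real.exp_zero, mul_one] at h2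

lemma good_of_q {s Q ρ : ℝ} (hs : 7 ≤ s) (hQs : Qf s = Q) (hρ : 0 < ρ) (hρ3 : ρ ≠ 3) :
    Good Q (fun t => q (t * s) / q s) ρ := by
  have hs0 : 0 < s := by linarith
  have hqs := q_pos hs0
  have hQe : Q * q s = s * (Real.exp s - 1) := by
    rw [← hQs]; unfold Qf
    exact div_mul_cancel₀ _ hqs.ne'
  have hQ : 7 ≤ Q := by
    have : s * q s ≤ Q * q s := by
      rw [hQe]; unfold q; nlinarith
    linarith [le_of_mul_le_mul_right this hqs]
  have hL : Q / s * q s = Real.exp s - 1 := by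
    rw [div_mul_eq_mul_div, hQe]; field_simp
  have htan : ∀ t, 0 < t → q (t * s) / q s ≤ Real.exp ((t - 1) * Q) := by
    intro t ht
    have := q_tangent hs0 hL (u := t * s) (by positivity)
    rw [div_le_iff₀ hqs]
    rw [show Q / s * (t * s - s) = (t - 1) * Q by field_simp] at this
    linarith
  refine good_all hQ (fun t _ => div_nonneg (q_nonneg _) hqs.le) htan ?_ hρ hρ3
  intro t ht ht4
  have h1 := htan (1/4) (by norm_num)
  have h2 := q_quad (θ := 4 * t) (y := 1/4 * s) (by linarith) (by linarith) (by linarith)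
  rw [show 4 * t * (1/4 * s) = t * s by ring] at h2
  rw [show (1/4 - 1) * Q = -(3/4 * Q) by ring] at h1
  calc q (t * s) / q s ≤ (4 * t) ^ 2 * q (1/4 * s) / q s := by gcongr
    _ = 16 * t ^ 2 * (q (1/4 * s) / q s) := by ring
    _ ≤ _ := by gcongr

/-- the `ω`-free, everywhere continuous upper bound -/
noncomputable def Kf (k : ℕ) (γ s a b c lam : ℝ) : ℝ :=
  ((3 * q a + q b) / q s) *
  Real.exp ((k * γ) * (lam * Real.log lam + lam * Real.log (s / (a * c)) +
    ((1 - lam) * Real.log (1 - lam) + (1 - lam) * Real.log (s / b)))) *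
  (((1 + c) ^ k + 3 * |1 - c / 3| ^ k) / 16) ^ γ

lemma Kf_cont (k : ℕ) (γ s a b c : ℝ) : Continuous (Kf k γ s a b c) := by
  unfold Kf
  have h1 : Continuous fun x : ℝ => x * Real.log x := Real.continuous_mul_log
  have h2 : Continuous fun x : ℝ => (1 - x) * Real.log (1 - x) :=
    h1.comp (continuous_const.sub continuous_id)
  fun_prop

lemma Psi_le_Kf {k : ℕ} {γ s a b c lam ω : ℝ} (hγ : 0 < γ) (hs : 0 < s) (ha : 0 < a) (hb : 0 < b)
    (hc : 0 < c) (hl : lam ∈ Set.Ioo (0:ℝ) 1) (hω : ω ∈ Set.Ioo (0:ℝ) 1) :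
    Psi 4 k γ s ω lam a b c ≤ Kf k γ s a b c lam := by
  obtain ⟨hl0, hl1⟩ := hl
  obtain ⟨hω0, hω1⟩ := hω
  have hω' : 0 < 1 - ω := by linarith
  have hl' : 0 < 1 - lam := by linarith
  have hqs := q_pos hs
  have hqa := q_pos ha
  have hqb := q_pos hb
  unfold Psi Kf
  have d3 : ((4 : ℕ) : ℝ) - 1 = 3 := by norm_num
  rw [d3]
  have h12 : (3 * q a / (q s * ω)) ^ ω * (q b / (q s * (1 - ω))) ^ (1 - ω) ≤
      (3 * q a + q b) / q s := by
    have := Real.geom_mean_le_arith_mean2_weighted hω0.le hω'.le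
      (p₁ := 3 * q a / (q s * ω)) (p₂ := q b / (q s * (1 - ω))) (by positivity) (by positivity)
      (by ring)
    refine this.trans (le_of_eq ?_)
    field_simp
  have h34 : (lam * s / (a * c)) ^ (lam * ((k:ℝ) * γ)) * ((1 - lam) * s / b) ^ ((1 - lam) * ((k:ℝ) * γ))
      = Real.exp ((k * γ) * (lam * Real.log lam + lam * Real.log (s / (a * c)) +
    ((1 - lam) * Real.log (1 - lam) + (1 - lam) * Real.log (s / b)))) := by
    rw [Real.rpow_def_of_pos (by positivity), Real.rpow_def_of_pos (by positivity), ← Real.exp_add]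
    rw [mul_div_assoc, mul_div_assoc, Real.log_mul hl0.ne' (by positivity),
      Real.log_mul hl'.ne' (by positivity)]
    congr 1
    ring
  have h5 : (pgen 4 k c / ((4 : ℕ) : ℝ)) ^ γ ≤ (((1 + c) ^ k + 3 * |1 - c / 3| ^ k) / 16) ^ γ := by
    refine (le_abs_self _).trans ((Real.abs_rpow_le_abs_rpow _ _).trans ?_)
    refine Real.rpow_le_rpow (abs_nonneg _) ?_ hγ.le
    unfold pgen
    rw [d3]
    have e : 1 / ((4 : ℕ) : ℝ) * ((1 + c) ^ k + 3 * (1 - c / 3) ^ k) / ((4 : ℕ) : ℝ) =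
      ((1 + c) ^ k + 3 * (1 - c / 3) ^ k) / 16 := by push_cast; ring
    rw [e, abs_div, abs_of_pos (by norm_num : (0:ℝ) < 16)]
    gcongr
    refine (abs_add_le _ _).trans ?_
    rw [abs_mul, abs_pow, abs_pow, abs_of_pos (by linarith : 0 < 1 + c),
      abs_of_pos (by norm_num : (0:ℝ) < 3)]
  rw [mul_assoc ((3 * q a / (q s * ω)) ^ ω * _), h34]
  refine (mul_le_mul_of_nonneg_left h5 (by positivity)).trans ?_
  gcongr

lemma p_le {k : ℕ} {γ c : ℝ} (hγ : 0 < γ) (hγ1 : γ < 1) (hc : 0 < c) :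
    (((1 + c) ^ k + 3 * |1 - c / 3| ^ k) / 16) ^ γ ≤
      ((1 + c) ^ (k * γ) + 3 * |1 - c / 3| ^ (k * γ)) / 16 ^ γ := by
  have h1c : 0 ≤ 1 + c := by linarith
  have hv : 0 ≤ |1 - c / 3| := abs_nonneg _
  set v := |1 - c / 3|
  rw [Real.div_rpow (by positivity) (by norm_num)]
  gcongr
  rw [Real.rpow_mul h1c, Real.rpow_mul hv, Real.rpow_natCast, Real.rpow_natCast]
  set A := (1 + c) ^ k
  have hA : 0 ≤ A := by positivity
  have hB : 0 ≤ v ^ k := by positivity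
  set B := v ^ k
  have h1 := Real.rpow_add_le_add_rpow hA (by linarith : 0 ≤ 3 * B) hγ.le hγ1.le
  have h2 := Real.rpow_add_le_add_rpow hB (by linarith : 0 ≤ B + B) hγ.le hγ1.le
  have h3 := Real.rpow_add_le_add_rpow hB hB hγ.le hγ1.le
  rw [show B + (B + B) = 3 * B by ring] at h2
  linarith

lemma T_eq (γ : ℝ) : (4:ℝ) ^ (1 - 2 * γ) = 4 / 16 ^ γ := by
  rw [Real.rpow_sub (by norm_num), Real.rpow_one, Real.rpow_mul (by norm_num)]
  norm_num

/-- interior points -/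
lemma exists_interior {k : ℕ} {γ s lam : ℝ} (hγ : 0 < γ) (hγ1 : γ < 1) (hs7 : 7 ≤ s)
    (hQs : Qf s = k * γ) (hl : lam ∈ Set.Ioo (0:ℝ) 1) (h34 : lam ≠ 3/4) :
    ∃ a b c : ℝ, 0 < a ∧ 0 < b ∧ 0 < c ∧ Kf k γ s a b c lam < (4:ℝ) ^ (1 - 2 * γ) := by
  obtain ⟨hl0, hl1⟩ := hl
  have hs : 0 < s := by linarith
  have hqs := q_pos hs
  have hl' : 0 < 1 - lam := by linarith
  obtain ⟨t, c, ht, hc, htc, hmain⟩ := good_of_q (ρ := lam / (1 - lam)) hs7 hQs (by positivity) (by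
    intro h
    rw [div_eq_iff hl'.ne'] at h
    apply h34; linarith)
  refine ⟨t * s, s, c, by positivity, hs, hc, ?_⟩
  unfold Kf
  have e1 : s / (t * s * c) = (1 - lam) / lam := by
    have : t * s * c = lam / (1 - lam) * s := by rw [← htc]; ring
    rw [this]; field_simp
  have e2 : 1 + t * c = 1 / (1 - lam) := by rw [htc]; field_simp; ring
  have e3 : Real.exp ((k * γ) * (lam * Real.log lam + lam * Real.log (s / (t * s * c)) +
    ((1 - lam) * Real.log (1 - lam) + (1 - lam) * Real.log (s / s)))) =
      ((1 + t * c) ^ ((k:ℝ) * γ))⁻¹ := by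
    rw [e1, e2, div_self hs.ne', Real.log_one, Real.log_div hl'.ne' hl0.ne',
      Real.rpow_def_of_pos (by positivity), ← Real.exp_neg, one_div, Real.log_inv]
    congr 1
    ring
  rw [e3, T_eq]
  have hp := p_le (k := k) hγ hγ1 hc
  have hP : 0 < (1 + t * c) ^ ((k:ℝ) * γ) := by positivity
  have e4 : (3 * q (t * s) + q s) / q s = 1 + 3 * (q (t * s) / q s) := by field_simp; ring
  rw [e4]
  have hg0 : 0 ≤ q (t * s) / q s := div_nonneg (q_nonneg _) hqs.le
  set G := 1 + 3 * (q (t * s) / q s) with hG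
  have hG0 : 0 ≤ G := by positivity
  have h16 : (0:ℝ) < 16 ^ γ := by positivity
  calc G * ((1 + t * c) ^ ((k:ℝ) * γ))⁻¹ * (((1 + c) ^ k + 3 * |1 - c / 3| ^ k) / 16) ^ γ
      ≤ G * ((1 + t * c) ^ ((k:ℝ) * γ))⁻¹ *
        (((1 + c) ^ (k * γ) + 3 * |1 - c / 3| ^ (k * γ)) / 16 ^ γ) := by gcongr
    _ = (G * ((1 + c) ^ (k * γ) + 3 * |1 - c / 3| ^ (k * γ))) *
        ((1 + t * c) ^ ((k:ℝ) * γ))⁻¹ / 16 ^ γ := by ring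
    _ < (4 * (1 + t * c) ^ ((k:ℝ) * γ)) * ((1 + t * c) ^ ((k:ℝ) * γ))⁻¹ / 16 ^ γ := by gcongr
    _ = 4 / 16 ^ γ := by rw [mul_assoc, mul_inv_cancel₀ hP.ne', mul_one]

lemma exists_pos_of_cont {f : ℝ → ℝ} {T : ℝ} (hf : ContinuousAt f 0) (h0 : f 0 < T) :
    ∃ e : ℝ, 0 < e ∧ f e < T := by
  have h1 := hf.eventually (gt_mem_nhds h0)
  obtain ⟨δ, hδ, h⟩ := Metric.eventually_nhds_iff.1 h1
  refine ⟨δ / 2, by linarith, h ?_⟩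
  rw [Real.dist_eq, sub_zero, abs_of_pos (by linarith)]; linarith

lemma exists_zero {k : ℕ} {γ s : ℝ} (hγ : 0 < γ) (hγ1 : γ < 1) (hs : 0 < s) :
    ∃ a b c : ℝ, 0 < a ∧ 0 < b ∧ 0 < c ∧ Kf k γ s a b c 0 < (4:ℝ) ^ (1 - 2 * γ) := by
  have hqs := q_pos hs
  have q0 : q 0 = 0 := by simp [q]
  obtain ⟨e, he, h⟩ := exists_pos_of_cont (T := (4:ℝ) ^ (1 - 2 * γ))
    (f := fun e => ((3 * q e + q s) / q s) * (((1 + e) ^ k + 3 * |1 - e / 3| ^ k) / 16) ^ γ) (by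
      have := q_cont
      apply Continuous.continuousAt
      refine Continuous.mul (by fun_prop) ?_
      exact Continuous.rpow_const (by fun_prop) (fun x => Or.inr hγ.le)) (by
      simp only [q0]
      norm_num
      rw [div_self hqs.ne', one_mul]
      rw [show (1/4 : ℝ) = 4 ^ (-1 : ℝ) by norm_num [Real.rpow_neg_one], ← Real.rpow_mul (by norm_num)]
      exact Real.rpow_lt_rpow_of_exponent_lt (by norm_num) (by linarith))
  refine ⟨e, s, e, he, hs, he, ?_⟩
  unfold Kf
  simpa [div_self hs.ne'] using h

lemma exists_one {k : ℕ} {γ s : ℝ} (hγ : 0 < γ) (hγ1 : γ < 1) (hkγ : 2 < (k:ℝ) * γ) (hs : 0 < s) :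
    ∃ a b c : ℝ, 0 < a ∧ 0 < b ∧ 0 < c ∧ Kf k γ s a b c 1 < (4:ℝ) ^ (1 - 2 * γ) := by
  have hqs := q_pos hs
  have q0 : q 0 = 0 := by simp [q]
  have hQ0 : 0 < (k:ℝ) * γ := by linarith
  obtain ⟨e, he, h⟩ := exists_pos_of_cont (T := 4)
    (f := fun e => ((3 * q s + q e) / q s) *
      ((1 + e) ^ ((k:ℝ) * γ) + 3 * |e - 1 / 3| ^ ((k:ℝ) * γ))) (by
      have := q_cont
      apply Continuous.continuousAt
      refine Continuous.mul (by fun_prop) (Continuous.add ?_ (Continuous.mul continuous_const ?_))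
      · exact Continuous.rpow_const (by fun_prop) (fun x => Or.inr hQ0.le)
      · exact Continuous.rpow_const (by fun_prop) (fun x => Or.inr hQ0.le)) (by
      simp only [q0]
      have h3 : ((1:ℝ)/3) ^ ((k:ℝ) * γ) < (1/3) ^ (2:ℝ) :=
        Real.rpow_lt_rpow_of_exponent_gt (by norm_num) (by norm_num) hkγ
      have e1 : |(0:ℝ) - 1 / 3| = 1/3 := by rw [zero_sub, abs_neg, abs_of_pos (by norm_num)]
      rw [e1, add_zero, add_zero, Real.one_rpow, mul_div_assoc, div_self hqs.ne']
      norm_num at h3 ⊢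
      linarith)
  refine ⟨s, e, 1 / e, hs, he, by positivity, ?_⟩
  unfold Kf
  have hp := p_le (k := k) hγ hγ1 (by positivity : 0 < 1 / e)
  have e1 : Real.exp ((k * γ) * (1 * Real.log 1 + 1 * Real.log (s / (s * (1 / e))) +
    ((1 - 1) * Real.log (1 - 1) + (1 - 1) * Real.log (s / e)))) = e ^ ((k:ℝ) * γ) := by
    have : s / (s * (1 / e)) = e := by field_simp
    rw [this, Real.rpow_def_of_pos he]
    congr 1
    simp; ring
  rw [e1, T_eq]
  have hg0 : 0 ≤ (3 * q s + q e) / q s :=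
    div_nonneg (by linarith [q_nonneg e]) hqs.le
  have h16 : (0:ℝ) < 16 ^ γ := by positivity
  have e2 : e ^ ((k:ℝ) * γ) * (1 + 1 / e) ^ ((k:ℝ) * γ) = (1 + e) ^ ((k:ℝ) * γ) := by
    rw [← Real.mul_rpow he.le (by positivity)]
    congr 1
    field_simp; ring
  have e3 : e ^ ((k:ℝ) * γ) * |1 - 1 / e / 3| ^ ((k:ℝ) * γ) = |e - 1 / 3| ^ ((k:ℝ) * γ) := by
    rw [← Real.mul_rpow he.le (by positivity)]
    congr 1
    nth_rewrite 1 [← abs_of_pos he]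
    rw [← abs_mul]
    congr 1
    field_simp
  calc (3 * q s + q e) / q s * e ^ ((k:ℝ) * γ) * (((1 + 1 / e) ^ k + 3 * |1 - 1 / e / 3| ^ k) / 16) ^ γ
      ≤ (3 * q s + q e) / q s * e ^ ((k:ℝ) * γ) *
        (((1 + 1 / e) ^ (k * γ) + 3 * |1 - 1 / e / 3| ^ (k * γ)) / 16 ^ γ) := by gcongr
    _ = (3 * q s + q e) / q s * (e ^ ((k:ℝ) * γ) * (1 + 1 / e) ^ ((k:ℝ) * γ) +
        3 * (e ^ ((k:ℝ) * γ) * |1 - 1 / e / 3| ^ ((k:ℝ) * γ))) / 16 ^ γ := by ring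
    _ < 4 / 16 ^ γ := by rw [e2, e3]; gcongr

lemma Kf_mid {k : ℕ} {γ s : ℝ} (hk : 1 ≤ k) (hs : 0 < s) :
    Kf k γ s s s 3 (3/4) = (4:ℝ) ^ (1 - 2 * γ) := by
  have hqs := q_pos hs
  unfold Kf
  have e1 : s / (s * 3) = 1/3 := by field_simp
  have e2 : Real.exp ((k * γ) * (3/4 * Real.log (3/4) + 3/4 * Real.log (s / (s * 3)) +
    ((1 - 3/4) * Real.log (1 - 3/4) + (1 - 3/4) * Real.log (s / s)))) = ((4:ℝ) ^ ((k:ℝ) * γ))⁻¹ := by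
    rw [e1, div_self hs.ne', Real.log_one, show (1 - 3/4 : ℝ) = 1/4 by norm_num,
      Real.log_div (by norm_num) (by norm_num), one_div, one_div, Real.log_inv, Real.log_inv,
      Real.rpow_def_of_pos (by norm_num), ← Real.exp_neg]
    congr 1
    ring
  have e3 : |(1:ℝ) - 3 / 3| ^ k = 0 := by
    norm_num; omega
  have e4 : (3 * q s + q s) / q s = 4 := by field_simp; norm_num
  rw [e2, e3, e4, T_eq, show (1 + 3 : ℝ) = 4 by norm_num, mul_zero, add_zero,
    Real.div_rpow (by positivity) (by norm_num), ← Real.rpow_natCast, ← Real.rpow_mul (by norm_num)]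
  have : (0:ℝ) < 4 ^ ((k:ℝ) * γ) := by positivity
  field_simp

theorem stmt16 (k : ℕ) (hk : 1 ≤ k) (γ : ℝ) (hγ : γ ∈ Set.Ioo (0:ℝ) 1)
    (hkγ : 2 < (k:ℝ) * γ) (s : ℝ) (hs : 0 < s) (hQs : Qf s = (k:ℝ) * γ)
    (hs7 : 7 ≤ s) :
    (∀ lam ∈ Set.Ioo (0:ℝ) 1,
      ∃ a b c : ℝ, 0 < a ∧ 0 < b ∧ 0 < c ∧
        ∀ ω ∈ Set.Ioo (0:ℝ) 1,
          Psi 4 k γ s ω lam a b c ≤ (4:ℝ) ^ (1 - 2*γ)) ∧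
    (∀ ε : ℝ, 0 < ε → ∃ δ : ℝ, 0 < δ ∧
      ∀ lam ∈ Set.Ioo (0:ℝ) 1, ε ≤ |lam - 3/4| →
        ∃ a b c : ℝ, 0 < a ∧ 0 < b ∧ 0 < c ∧
          ∀ ω ∈ Set.Ioo (0:ℝ) 1,
            Psi 4 k γ s ω lam a b c ≤ (4:ℝ) ^ (1 - 2*γ) - δ) := by
  have hγ0 := hγ.1
  have hγ1 := hγ.2
  constructor
  · intro lam hl
    by_cases h34 : lam = 3/4
    · refine ⟨s, s, 3, hs, hs, by norm_num, fun ω hω => ?_⟩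
      rw [← Kf_mid (γ := γ) hk hs, ← h34]
      exact Psi_le_Kf hγ0 hs hs hs (by norm_num) hl hω
    · obtain ⟨a, b, c, ha, hb, hc, h⟩ := exists_interior hγ0 hγ1 hs7 hQs hl h34
      exact ⟨a, b, c, ha, hb, hc, fun ω hω => (Psi_le_Kf hγ0 hs ha hb hc hl hω).trans h.le⟩
  · intro ε hε
    have hcomp : IsCompact (Set.Icc (0:ℝ) 1 ∩ {lam | ε ≤ |lam - 3/4|}) := by
      refine isCompact_Icc.inter_right ?_
      exact isClosed_le continuous_const (by fun_prop)
    have hind : ∃ δ : ℝ, 0 < δ ∧ ∀ lam ∈ Set.Icc (0:ℝ) 1 ∩ {lam | ε ≤ |lam - 3/4|},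
        ∃ a b c : ℝ, 0 < a ∧ 0 < b ∧ 0 < c ∧ Kf k γ s a b c lam ≤ (4:ℝ) ^ (1 - 2*γ) - δ := by
      refine hcomp.induction_on (p := fun S => ∃ δ : ℝ, 0 < δ ∧ ∀ lam ∈ S,
        ∃ a b c : ℝ, 0 < a ∧ 0 < b ∧ 0 < c ∧ Kf k γ s a b c lam ≤ (4:ℝ) ^ (1 - 2*γ) - δ)
        ⟨1, one_pos, by simp⟩ ?_ ?_ ?_
      · rintro S T hST ⟨δ, hδ, h⟩
        exact ⟨δ, hδ, fun lam hlam => h lam (hST hlam)⟩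
      · rintro S T ⟨δ₁, hδ₁, h₁⟩ ⟨δ₂, hδ₂, h₂⟩
        refine ⟨min δ₁ δ₂, lt_min hδ₁ hδ₂, fun lam hlam => ?_⟩
        rcases hlam with hlam | hlam
        · obtain ⟨a, b, c, ha, hb, hc, h⟩ := h₁ lam hlam
          exact ⟨a, b, c, ha, hb, hc, by linarith [min_le_left δ₁ δ₂]⟩
        · obtain ⟨a, b, c, ha, hb, hc, h⟩ := h₂ lam hlam
          exact ⟨a, b, c, ha, hb, hc, by linarith [min_le_right δ₁ δ₂]⟩
      · rintro lam ⟨⟨hl0, hl1⟩, hlε⟩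
        have hlε : ε ≤ |lam - 3/4| := hlε
        have hex : ∃ a b c : ℝ, 0 < a ∧ 0 < b ∧ 0 < c ∧
            Kf k γ s a b c lam < (4:ℝ) ^ (1 - 2 * γ) := by
          rcases hl0.eq_or_lt with h | h
          · rw [← h]; exact exists_zero hγ0 hγ1 hs
          rcases hl1.eq_or_lt with h' | h'
          · rw [h']; exact exists_one hγ0 hγ1 hkγ hs
          refine exists_interior hγ0 hγ1 hs7 hQs ⟨h, h'⟩ ?_
          rintro rfl
          rw [sub_self, abs_zero] at hlε
          linarith
        obtain ⟨a, b, c, ha, hb, hc, h⟩ := hex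
        obtain ⟨M, hM1, hM2⟩ := exists_between h
        refine ⟨{x | Kf k γ s a b c x < M}, ?_, (4:ℝ) ^ (1 - 2 * γ) - M, by linarith, ?_⟩
        · exact mem_nhdsWithin_of_mem_nhds
            ((isOpen_lt (Kf_cont k γ s a b c) continuous_const).mem_nhds hM1)
        · intro x hx
          have hx : Kf k γ s a b c x < M := hx
          exact ⟨a, b, c, ha, hb, hc, by linarith⟩
    obtain ⟨δ, hδ, h⟩ := hind
    refine ⟨δ, hδ, fun lam hl hlε => ?_⟩
    obtain ⟨a, b, c, ha, hb, hc, h⟩ := h lam ⟨⟨hl.1.le, hl.2.le⟩, hlε⟩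
    exact ⟨a, b, c, ha, hb, hc, fun ω hω => (Psi_le_Kf hγ0 hs ha hb hc hl hω).trans h⟩
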